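/- Let μ be an atomless σ-finite positive measure and let Y be a nonzero Banach space over 𝕂 ∈ {ℝ, ℂ}. Then the Bochner space L_1(μ, Y) of μ-Bochner-integrable Y-valued functions has the polynomial weak operator Daugavet property. -/

import Mathlib

open Metric Set NormedSpace MeasureTheory

/-- `P : X → 𝕜` is a continuous polynomial: `P x = c + ∑ₖ Mₖ(x, …, x)` for a constant `c`
and continuous multilinear maps `Mₖ` of `k` variables, `k = 1, …, n`. -/
def IsContPolynomial {𝕜 X : Type} [RCLike 𝕜] [NormedAddCommGroup X] [NormedSpace 𝕜 X]
    (P : X → 𝕜) : Prop :=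
  ∃ (n : ℕ) (c : 𝕜)
    (M : (k : Fin n) → ContinuousMultilinearMap 𝕜 (fun _ : Fin (k.1 + 1) => X) 𝕜),
    ∀ x, P x = c + ∑ k, M k (fun _ => x)

/-- The polynomial weak operator Daugavet property: for every continuous polynomial `P`
with `‖P‖ = 1`, all `x₁, …, xₙ ∈ S_X`, every `x' ∈ B_X` and all `α, ε > 0`, there are
`y ∈ B_X`, a modulus-one scalar `ω` and an operator `T : X → X` with `‖T‖ ≤ 1 + ε`,
`‖T xᵢ - xᵢ‖ < ε` for all `i`, `‖T y - x'‖ < ε` and `Re (ω P(y)) > 1 - α`. -/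
def PolyWODP (𝕜 X : Type) [RCLike 𝕜] [NormedAddCommGroup X] [NormedSpace 𝕜 X] : Prop :=
  ∀ P : X → 𝕜, IsContPolynomial P →
    IsLUB ((fun y => ‖P y‖) '' closedBall (0 : X) 1) 1 →
    ∀ (n : ℕ) (xs : Fin n → X), (∀ i, ‖xs i‖ = 1) →
      ∀ x' : X, ‖x'‖ ≤ 1 → ∀ α > (0 : ℝ), ∀ ε > (0 : ℝ),
        ∃ (y : X) (ω : 𝕜) (T : X →L[𝕜] X), ‖y‖ ≤ 1 ∧ ‖ω‖ = 1 ∧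
          ‖T‖ ≤ 1 + ε ∧ (∀ i, ‖T (xs i) - xs i‖ < ε) ∧ ‖T y - x'‖ < ε ∧
          1 - α < RCLike.re (ω * P y)

/-- `μ` is atomless: every measurable set of positive measure contains a measurable
subset of strictly smaller positive measure. -/
def Atomless {α : Type} [MeasurableSpace α] (μ : Measure α) : Prop :=
  ∀ A : Set α, MeasurableSet A → 0 < μ A →
    ∃ B ⊆ A, MeasurableSet B ∧ 0 < μ B ∧ μ B < μ A

section Sierpinski

variable {α : Type} [MeasurableSpace α]

lemma atomless_small (ν : Measure α) [IsFiniteMeasure ν] (hν : Atomless ν) (A : Set α)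
    (hA : MeasurableSet A) (h0 : 0 < ν.real A) (δ : ℝ) (hδ : 0 < δ) :
    ∃ B ⊆ A, MeasurableSet B ∧ 0 < ν.real B ∧ ν.real B ≤ δ := by
  have key : ∀ n : ℕ, ∃ B ⊆ A, MeasurableSet B ∧ 0 < ν.real B ∧ ν.real B ≤ ν.real A * (1/2)^n := by
    intro n
    induction n with
    | zero => exact ⟨A, subset_rfl, hA, h0, by simp⟩
    | succ n ih =>
      obtain ⟨B, hBA, hB, hB0, hBn⟩ := ih
      obtain ⟨C, hCB, hC, hC0, hClt⟩ := hν B hB (by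
        rw [Measure.real, ENNReal.toReal_pos_iff] at hB0; exact hB0.1)
      have h1 : 0 < ν.real C := ENNReal.toReal_pos hC0.ne' (measure_ne_top _ _)
      have h2 : ν.real C < ν.real B := (ENNReal.toReal_lt_toReal (measure_ne_top _ _) (measure_ne_top _ _)).2 hClt
      have h3 : ν.real (B \ C) = ν.real B - ν.real C := measureReal_sdiff hCB hC
      by_cases h : ν.real C ≤ ν.real B / 2
      · exact ⟨C, hCB.trans hBA, hC, h1, by rw [pow_succ]; linarith⟩
      · exact ⟨B \ C, sdiff_subset.trans hBA, hB.diff hC, by linarith, by rw [pow_succ]; linarith⟩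
  have : Filter.Tendsto (fun n : ℕ => ν.real A * (1/2 : ℝ)^n) Filter.atTop (nhds (ν.real A * 0)) :=
    (tendsto_pow_atTop_nhds_zero_of_lt_one (by norm_num) (by norm_num)).const_mul _
  rw [mul_zero] at this
  obtain ⟨n, hn⟩ := (this.eventually (gt_mem_nhds hδ)).exists
  obtain ⟨B, h1, h2, h3, h4⟩ := key n
  exact ⟨B, h1, h2, h3, h4.trans hn.le⟩

lemma sierpinski (ν : Measure α) [IsFiniteMeasure ν] (hν : Atomless ν) (S : Set α)
    (hS : MeasurableSet S) (t : ℝ) (ht0 : 0 ≤ t) (ht : t ≤ ν.real S) :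
    ∃ B ⊆ S, MeasurableSet B ∧ ν.real B = t := by
  let St := {U : Set α // MeasurableSet U ∧ U ⊆ S ∧ ν.real U ≤ t}
  have next : ∀ U : St, ∃ V : St, U.1 ⊆ V.1 ∧ ∀ W : St, U.1 ⊆ W.1 →
      ν.real W.1 - ν.real U.1 ≤ 2 * (ν.real V.1 - ν.real U.1) := by
    intro U
    set R : Set ℝ := {r | ∃ W : St, U.1 ⊆ W.1 ∧ ν.real W.1 = r}
    have hb : BddAbove R := ⟨t, by rintro r ⟨W, -, rfl⟩; exact W.2.2.2⟩
    have hU : ν.real U.1 ∈ R := ⟨U, subset_rfl, rfl⟩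
    rcases (le_csSup hb hU).eq_or_lt with h | h
    · refine ⟨U, subset_rfl, fun W hW => ?_⟩
      have := le_csSup hb (show ν.real W.1 ∈ R from ⟨W, hW, rfl⟩)
      linarith
    · obtain ⟨_, ⟨V, hV, rfl⟩, hlt⟩ := exists_lt_of_lt_csSup ⟨_, hU⟩
        (show (sSup R + ν.real U.1) / 2 < sSup R by linarith)
      refine ⟨V, hV, fun W hW => ?_⟩
      have := le_csSup hb (show ν.real W.1 ∈ R from ⟨W, hW, rfl⟩)
      linarith
  choose nx hnx1 hnx2 using next
  let U : ℕ → St := fun n => Nat.rec ⟨∅, by simp [ht0]⟩ (fun _ V => nx V) n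
  have hUs : ∀ n, U (n+1) = nx (U n) := fun n => rfl
  have hmono : Monotone (fun n => (U n).1) := monotone_nat_of_le_succ fun n => by
    rw [hUs]; exact hnx1 _
  set Ui : Set α := ⋃ n, (U n).1 with hUi
  have hlim : Filter.Tendsto (fun n => ν.real (U n).1) Filter.atTop (nhds (ν.real Ui)) :=
    (ENNReal.tendsto_toReal (measure_ne_top _ _)).comp (tendsto_measure_iUnion_atTop hmono)
  have hUim : MeasurableSet Ui := MeasurableSet.iUnion fun n => (U n).2.1
  have hUiS : Ui ⊆ S := iUnion_subset fun n => (U n).2.2.1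
  have hUit : ν.real Ui ≤ t := le_of_tendsto' hlim fun n => (U n).2.2.2
  refine ⟨Ui, hUiS, hUim, ?_⟩
  by_contra hne
  have hlt : ν.real Ui < t := lt_of_le_of_ne hUit hne
  have h3 : ν.real (S \ Ui) = ν.real S - ν.real Ui := measureReal_sdiff hUiS hUim
  obtain ⟨B, hB, hBm, hB0, hBt⟩ := atomless_small ν hν (S \ Ui) (hS.diff hUim) (by linarith)
    (t - ν.real Ui) (by linarith)
  have hd : Disjoint Ui B := by
    rw [Set.disjoint_left]; intro x hx hxB; exact (hB hxB).2 hx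
  have hun : ν.real (Ui ∪ B) = ν.real Ui + ν.real B := measureReal_union hd hBm
  let W : St := ⟨Ui ∪ B, hUim.union hBm, union_subset hUiS (hB.trans sdiff_subset), by linarith⟩
  have h4 : ∀ n, ν.real W.1 - ν.real (U n).1 ≤ 2 * (ν.real (U (n+1)).1 - ν.real (U n).1) := by
    intro n
    rw [hUs]
    exact hnx2 _ W ((subset_iUnion (fun n => (U n).1) n).trans subset_union_left)
  have h5 := le_of_tendsto_of_tendsto' (hlim.const_sub (ν.real W.1))
    (((hlim.comp (Filter.tendsto_add_atTop_nat 1)).sub hlim).const_mul 2) h4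
  have : ν.real W.1 = ν.real Ui + ν.real B := hun
  linarith

lemma equipartition (ν : Measure α) [IsFiniteMeasure ν] (hν : Atomless ν) (c : ℝ) (hc : 0 ≤ c)
    (M : ℕ) : ∀ (S : Set α), MeasurableSet S → ν.real S = M * c →
    ∃ E : Fin M → Set α, (∀ i, MeasurableSet (E i)) ∧ (∀ i, E i ⊆ S) ∧
      Pairwise (fun i j => Disjoint (E i) (E j)) ∧ ∀ i, ν.real (E i) = c := by
  induction M with
  | zero => intro S _ _; exact ⟨fun i => i.elim0, fun i => i.elim0, fun i => i.elim0, fun i => i.elim0, fun i => i.elim0⟩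
  | succ M ih =>
    intro S hS h
    push_cast at h
    obtain ⟨B, hBS, hB, hBc⟩ := sierpinski ν hν S hS c hc (by
      rw [h]; nlinarith [mul_nonneg (Nat.cast_nonneg (α := ℝ) M) hc])
    obtain ⟨E, h1, h2, h3, h4⟩ := ih (S \ B) (hS.diff hB) (by
      rw [measureReal_sdiff hBS hB, h, hBc]; ring)
    have hd : ∀ i, Disjoint B (E i) := fun i => by
      rw [Set.disjoint_left]; intro x hx hxB; exact (h2 i hxB).2 hx
    refine ⟨Fin.cons B E, ?_, ?_, ?_, ?_⟩
    · intro i; refine Fin.cases hB h1 i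
    · intro i; refine Fin.cases hBS (fun i => (h2 i).trans sdiff_subset) i
    · intro i j
      refine Fin.cases ?_ (fun i => ?_) i <;> refine Fin.cases ?_ (fun j => ?_) j
      · intro h; exact absurd rfl h
      · intro _; exact hd j
      · intro _; exact (hd i).symm
      · intro h; exact h3 (fun hh : i = j => h (by rw [hh]))
    · intro i; refine Fin.cases hBc h4 i

end Sierpinski
section Smooth

/-- Uniform first-order expansion on the unit ball. -/
def UC (𝕜 : Type) {V G : Type} [RCLike 𝕜] [NormedAddCommGroup V] [NormedSpace 𝕜 V]
    [NormedAddCommGroup G] [NormedSpace 𝕜 G] (f : V → G) : Prop :=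
  ∃ K : ℝ, 0 ≤ K ∧ ∀ a : V, ‖a‖ ≤ 1 → ∃ L : V →L[𝕜] G, ‖f a‖ ≤ K ∧ ‖L‖ ≤ K ∧
    ∀ v : V, ‖v‖ ≤ 2 → ‖f (a + v) - f a - L v‖ ≤ K * ‖v‖ ^ 2

variable {𝕜 : Type} {V G H : Type} [RCLike 𝕜] [NormedAddCommGroup V] [NormedSpace 𝕜 V]
    [NormedAddCommGroup G] [NormedSpace 𝕜 G] [NormedAddCommGroup H] [NormedSpace 𝕜 H]

lemma UC.const (c : G) : UC 𝕜 (fun _ : V => c) :=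
  ⟨‖c‖, norm_nonneg _, fun a _ => ⟨0, le_rfl, by simp, fun v _ => by
    simp; positivity⟩⟩

lemma UC.add {f g : V → G} (hf : UC 𝕜 f) (hg : UC 𝕜 g) : UC 𝕜 (fun x => f x + g x) := by
  obtain ⟨K, hK, hf⟩ := hf
  obtain ⟨K', hK', hg⟩ := hg
  refine ⟨K + K', by positivity, fun a ha => ?_⟩
  obtain ⟨L, h1, h2, h3⟩ := hf a ha
  obtain ⟨L', h1', h2', h3'⟩ := hg a ha
  refine ⟨L + L', (norm_add_le _ _).trans (by gcongr), (norm_add_le _ _).trans (by gcongr), ?_⟩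
  intro v hv
  have : f (a + v) + g (a + v) - (f a + g a) - (L + L') v
    = (f (a + v) - f a - L v) + (g (a + v) - g a - L' v) := by
    simp; abel
  rw [this, add_mul]
  exact (norm_add_le _ _).trans (add_le_add (h3 v hv) (h3' v hv))

lemma UC.sum {ι : Type} (s : Finset ι) {f : ι → V → G} (hf : ∀ i, UC 𝕜 (f i)) :
    UC 𝕜 (fun x => ∑ i ∈ s, f i x) := by
  classical
  induction s using Finset.induction_on with
  | empty => simpa using UC.const (0 : G)
  | insert i s hi ih => simp only [Finset.sum_insert hi]; exact (hf i).add ih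

lemma UC.clm {f : V → G} (hf : UC 𝕜 f) (A : G →L[𝕜] H) : UC 𝕜 (fun x => A (f x)) := by
  obtain ⟨K, hK, hf⟩ := hf
  refine ⟨‖A‖ * K, by positivity, fun a ha => ?_⟩
  obtain ⟨L, h1, h2, h3⟩ := hf a ha
  refine ⟨A.comp L, (A.le_opNorm _).trans (by gcongr), (A.opNorm_comp_le _).trans (by gcongr), ?_⟩
  intro v hv
  have : A (f (a + v)) - A (f a) - A.comp L v = A (f (a + v) - f a - L v) := by simp
  rw [this, mul_assoc]
  exact (A.le_opNorm _).trans (by gcongr; exact h3 v hv)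

lemma UC.eval {f : V → (V →L[𝕜] G)} (hf : UC 𝕜 f) : UC 𝕜 (fun x => f x x) := by
  obtain ⟨K, hK, hf⟩ := hf
  refine ⟨4 * K, by positivity, fun a ha => ?_⟩
  obtain ⟨L, h1, h2, h3⟩ := hf a ha
  refine ⟨L.flip a + f a, ?_, ?_, ?_⟩
  · calc ‖f a a‖ ≤ ‖f a‖ * ‖a‖ := (f a).le_opNorm a
      _ ≤ K * 1 := by gcongr
      _ ≤ 4 * K := by linarith
  · calc ‖L.flip a + f a‖ ≤ ‖L.flip‖ * ‖a‖ + ‖f a‖ :=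
          (norm_add_le _ _).trans (add_le_add ((L.flip).le_opNorm a) le_rfl)
      _ ≤ K * 1 + K := by rw [ContinuousLinearMap.opNorm_flip]; gcongr
      _ ≤ 4 * K := by linarith
  · intro v hv
    have : f (a + v) (a + v) - f a a - (L.flip a + f a) v
      = (f (a + v) - f a - L v) (a + v) + L v v := by
      simp; abel
    rw [this]
    calc _ ≤ ‖f (a + v) - f a - L v‖ * ‖a + v‖ + ‖L‖ * ‖v‖ * ‖v‖ :=
          (norm_add_le _ _).trans (add_le_add (ContinuousLinearMap.le_opNorm _ _) (L.le_opNorm₂ _ _))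
      _ ≤ (K * ‖v‖^2) * (1 + 2) + K * ‖v‖ * ‖v‖ := by
          gcongr
          · exact h3 v hv
          · exact (norm_add_le _ _).trans (by gcongr)
      _ = 4 * K * ‖v‖ ^ 2 := by ring

lemma UC.multi (k : ℕ) : ∀ (f : V → ContinuousMultilinearMap 𝕜 (fun _ : Fin k => V) 𝕜),
    UC 𝕜 f → UC 𝕜 (fun x => f x (fun _ => x)) := by
  induction k with
  | zero =>
    intro f hf
    have := hf.clm (ContinuousMultilinearMap.apply 𝕜 (fun _ : Fin 0 => V) 𝕜 (fun _ => 0))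
    convert this using 2 with x
    simp only [ContinuousMultilinearMap.apply_apply]
    congr 1
    ext i; exact i.elim0
  | succ k ih =>
    intro f hf
    have h1 := (hf.clm ((continuousMultilinearCurryLeftEquiv 𝕜 (fun _ : Fin (k+1) => V) 𝕜).toContinuousLinearEquiv.toContinuousLinearMap)).eval
    have h2 := ih _ h1
    convert h2 using 2 with x
    simp
    congr 1
    ext i; refine Fin.cases rfl (fun _ => rfl) i

lemma UC.poly {P : V → 𝕜} (hP : IsContPolynomial P) : UC 𝕜 P := by
  obtain ⟨n, c, M, h⟩ := hP
  rw [show P = fun x => c + ∑ k, M k (fun _ => x) from funext h]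
  exact (UC.const c).add (UC.sum _ fun k => UC.multi _ _ (UC.const (M k)))

lemma greedy_step {P : V → 𝕜} {K : ℝ} (hK : 0 ≤ K) (ω : 𝕜) (hω : ‖ω‖ = 1) {ι : Type} [Fintype ι]
    (w : ι → ℝ) (hw : ∀ i, 0 ≤ w i) (hw1 : ∑ i, w i = 1) (v : ι → V) (u z : V)
    (hu : u = ∑ i, (w i : 𝕜) • v i) (b : ι → ℝ) (η : ℝ) (hη : η ≤ 1)
    (hv : ∀ i, ‖v i‖ ≤ η) (hun : ‖u‖ ≤ η)
    (L : V →L[𝕜] 𝕜)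
    (hL : ∀ v : V, ‖v‖ ≤ 2 → ‖P (z + v) - P z - L v‖ ≤ K * ‖v‖ ^ 2) :
    ∃ i, RCLike.re (ω * P z) - ∑ i, w i * b i - 4 * K * η ^ 2 ≤
      RCLike.re (ω * P (z + (v i - u))) - b i := by
  set q : ι → ℝ := fun i => RCLike.re (ω * L (v i - u)) - (b i - ∑ i, w i * b i) with hq
  have hsum : ∑ i, w i * q i = 0 := by
    have e1 : ∑ i, w i * RCLike.re (ω * L (v i - u)) = RCLike.re (ω * L (∑ i, (w i : 𝕜) • (v i - u))) := by
      simp only [map_sum, map_smul, Finset.mul_sum]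
      refine Finset.sum_congr rfl fun i _ => ?_
      rw [smul_eq_mul, mul_left_comm, RCLike.re_ofReal_mul]
    have e2 : ∑ i, (w i : 𝕜) • (v i - u) = 0 := by
      simp only [smul_sub, Finset.sum_sub_distrib, ← Finset.sum_smul, ← hu]
      rw [← RCLike.ofReal_sum, hw1]; simp
    rw [e2] at e1
    have e3 : ∑ i, w i * q i = ∑ i, w i * RCLike.re (ω * L (v i - u))
        - (∑ i, w i * b i - (∑ i, w i) * ∑ i, w i * b i) := by
      rw [Finset.sum_mul, ← Finset.sum_sub_distrib, ← Finset.sum_sub_distrib]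
      exact Finset.sum_congr rfl fun i _ => by simp only [hq]; ring
    rw [e3, e1, hw1]; simp
  have hex : ∃ i, 0 ≤ q i := by
    by_contra hcon
    push Not at hcon
    have h0 : ∀ i ∈ Finset.univ, w i * q i ≤ 0 := fun i _ => by nlinarith [hw i, hcon i]
    have h1 := (Finset.sum_eq_zero_iff_of_nonpos h0).1 hsum
    have h2 : ∀ i, w i = 0 := fun i => by
      rcases mul_eq_zero.1 (h1 i (Finset.mem_univ i)) with h | h
      · exact h
      · linarith [hcon i]
    simp [h2] at hw1
  obtain ⟨i, hi⟩ := hex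
  refine ⟨i, ?_⟩
  have hn : ‖v i - u‖ ≤ 2 * η := (norm_sub_le _ _).trans (by linarith [hv i])
  have h1 := hL (v i - u) (by linarith)
  have h2 : |RCLike.re (ω * (P (z + (v i - u)) - P z - L (v i - u)))| ≤ K * ‖v i - u‖^2 := by
    refine (RCLike.abs_re_le_norm _).trans ?_
    rw [norm_mul, hω, one_mul]; exact h1
  have h3 : K * ‖v i - u‖^2 ≤ K * (2*η)^2 := by gcongr
  have h4 := (abs_le.1 h2).1
  simp only [mul_sub, map_sub] at h4
  simp only [hq, mul_sub, map_sub] at hi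
  nlinarith

lemma greedy {P : V → 𝕜} {K : ℝ} (hK : 0 ≤ K)
    (hP : ∀ a : V, ‖a‖ ≤ 1 → ∃ L : V →L[𝕜] 𝕜, ‖P a‖ ≤ K ∧ ‖L‖ ≤ K ∧
      ∀ v : V, ‖v‖ ≤ 2 → ‖P (a + v) - P a - L v‖ ≤ K * ‖v‖ ^ 2)
    (ω : 𝕜) (hω : ‖ω‖ = 1) {ι : Type} [Fintype ι]
    (w : ι → ℝ) (hw : ∀ i, 0 ≤ w i) (hw1 : ∑ i, w i = 1) (m : ℕ) (hm : 0 < m)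
    (v : Fin m → ι → V) (u : Fin m → V)
    (hu : ∀ j, u j = ∑ i, (w i : 𝕜) • v j i) (b : Fin m → ι → ℝ)
    (hv : ∀ j i, ‖v j i‖ ≤ 1 / m) :
    ∃ c : Fin m → ι, RCLike.re (ω * P (∑ j, u j)) - ∑ j, ∑ i, w i * b j i - 4 * K / m ≤
      RCLike.re (ω * P (∑ j, v j (c j))) - ∑ j, b j (c j) := by
  classical
  have hne : Nonempty ι := by
    by_contra h
    rw [not_nonempty_iff] at h
    simp at hw1
  have hm1 : (1:ℝ) ≤ m := by exact_mod_cast hm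
  have hun : ∀ j, ‖u j‖ ≤ 1 / m := by
    intro j
    rw [hu]
    calc _ ≤ ∑ i, ‖(w i : 𝕜) • v j i‖ := norm_sum_le _ _
      _ ≤ ∑ i, w i * (1 / m) := by
        refine Finset.sum_le_sum fun i _ => ?_
        rw [norm_smul, RCLike.norm_ofReal, abs_of_nonneg (hw i)]
        exact mul_le_mul_of_nonneg_left (hv j i) (hw i)
      _ = 1 / m := by rw [← Finset.sum_mul, hw1, one_mul]
  have main : ∀ s : Finset (Fin m), ∃ c : Fin m → ι,
      RCLike.re (ω * P (∑ j, u j)) - ∑ j ∈ s, ∑ i, w i * b j i - s.card * (4 * K * (1 / m)^2) ≤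
      RCLike.re (ω * P (∑ j, if j ∈ s then v j (c j) else u j)) - ∑ j ∈ s, b j (c j) := by
    intro s
    induction s using Finset.induction_on with
    | empty => exact ⟨fun _ => hne.some, by simp⟩
    | insert j s hj ih =>
      obtain ⟨c, hc⟩ := ih
      set z := ∑ j, if j ∈ s then v j (c j) else u j with hz
      have hzn : ‖z‖ ≤ 1 := by
        calc ‖z‖ ≤ ∑ j : Fin m, (1 / m : ℝ) := norm_sum_le_of_le _ fun j _ => by
              split_ifs
              · exact hv _ _
              · exact hun _
          _ = 1 := by simp; field_simp
      obtain ⟨L, -, -, hL⟩ := hP z hzn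
      obtain ⟨i, hi⟩ := greedy_step hK ω hω w hw hw1 (v j) (u j) z (hu j) (b j) (1 / m)
        (by rw [div_le_one (by linarith)]; exact hm1) (hv j) (hun j) L hL
      refine ⟨Function.update c j i, ?_⟩
      have e1 : ∑ k ∈ s, b k (Function.update c j i k) = ∑ k ∈ s, b k (c k) := by
        refine Finset.sum_congr rfl fun k hk => ?_
        rw [Function.update_of_ne (by rintro rfl; exact hj hk)]
      have e2 : (∑ k, if k ∈ insert j s then v k (Function.update c j i k) else u k)
          = z + (v j i - u j) := by
        rw [hz, ← Finset.add_sum_erase _ _ (Finset.mem_univ j),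
          ← Finset.add_sum_erase _ (fun k => if k ∈ s then v k (c k) else u k) (Finset.mem_univ j)]
        have : ∀ k ∈ Finset.univ.erase j, (if k ∈ insert j s then v k (Function.update c j i k) else u k)
            = if k ∈ s then v k (c k) else u k := by
          intro k hk
          have hkj := Finset.ne_of_mem_erase hk
          simp [hkj]
        rw [Finset.sum_congr rfl this]
        simp [hj]
        abel
      rw [e2, Finset.sum_insert hj, Finset.sum_insert hj, e1, Finset.card_insert_of_notMem hj]
      simp only [Function.update_self]
      push_cast
      linarith
  obtain ⟨c, hc⟩ := main Finset.univ
  refine ⟨c, ?_⟩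
  simp only [Finset.mem_univ, if_true, Finset.card_univ, Fintype.card_fin] at hc
  have : (m:ℝ) * (4 * K * (1 / m)^2) = 4 * K / m := by field_simp
  rwa [this] at hc

end Smooth
section LpPart

variable {𝕜 : Type} [RCLike 𝕜] {α : Type} [MeasurableSpace α] {μ : Measure α}
  {Y : Type} [NormedAddCommGroup Y] [NormedSpace 𝕜 Y]

variable (𝕜) in
/-- Multiplication by an indicator function on `L¹`. -/
noncomputable def Qp (S : Set α) (hS : MeasurableSet S) :
    Lp Y 1 μ →ₗ[𝕜] Lp Y 1 μ where
  toFun f := ((Lp.memLp f).indicator hS).toLp (S.indicator f)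
  map_add' f g := by
    rw [← MemLp.toLp_add, MemLp.toLp_eq_toLp_iff]
    filter_upwards [Lp.coeFn_add f g] with x hx
    by_cases h : x ∈ S
    · simpa [h] using hx
    · simp [h]
  map_smul' c f := by
    rw [RingHom.id_apply, ← MemLp.toLp_const_smul, MemLp.toLp_eq_toLp_iff]
    filter_upwards [Lp.coeFn_smul c f] with x hx
    by_cases h : x ∈ S
    · simpa [h] using hx
    · simp [h]

lemma Qp_def (S : Set α) (hS : MeasurableSet S) (f : Lp Y 1 μ) :
    Qp 𝕜 S hS f = ((Lp.memLp f).indicator hS).toLp (S.indicator f) := rfl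

lemma Qp_ae (S : Set α) (hS : MeasurableSet S) (f : Lp Y 1 μ) :
    (Qp 𝕜 S hS f : α → Y) =ᵐ[μ] S.indicator (f : α → Y) := by
  rw [Qp_def]
  have h : MemLp (S.indicator (f : α → Y)) 1 μ := (Lp.memLp f).indicator hS
  exact h.coeFn_toLp

/-- The measure with density `‖f‖`. -/
noncomputable def nu (f : Lp Y 1 μ) : Measure α := μ.withDensity (fun x => ‖f x‖ₑ)

lemma nu_apply (f : Lp Y 1 μ) {S : Set α} (hS : MeasurableSet S) :
    nu f S = ∫⁻ x in S, ‖f x‖ₑ ∂μ := withDensity_apply _ hS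

instance nu_finite (f : Lp Y 1 μ) : IsFiniteMeasure (nu f) :=
  isFiniteMeasure_withDensity (L1.integrable_coeFn f).2.ne

lemma norm_Qp (S : Set α) (hS : MeasurableSet S) (f : Lp Y 1 μ) :
    ‖Qp 𝕜 S hS f‖ = (nu f).real S := by
  rw [L1.norm_def, Measure.real, nu_apply f hS, ← lintegral_indicator hS]
  congr 1
  refine lintegral_congr_ae ?_
  filter_upwards [Qp_ae (𝕜 := 𝕜) S hS f] with x hx
  rw [hx]
  by_cases h : x ∈ S <;> simp [h]

lemma norm_nu (f : Lp Y 1 μ) : ‖f‖ = (nu f).real univ := by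
  rw [L1.norm_def, Measure.real, nu_apply f MeasurableSet.univ, Measure.restrict_univ]

lemma Qp_Qp (S T : Set α) (hS : MeasurableSet S) (hT : MeasurableSet T) (f : Lp Y 1 μ) :
    Qp 𝕜 S hS (Qp 𝕜 T hT f) = Qp 𝕜 (S ∩ T) (hS.inter hT) f := by
  apply Lp.ext
  filter_upwards [Qp_ae (𝕜 := 𝕜) S hS (Qp 𝕜 T hT f), Qp_ae (𝕜 := 𝕜) T hT f,
    Qp_ae (𝕜 := 𝕜) (S ∩ T) (hS.inter hT) f] with x h1 h2 h3
  rw [h1, h3]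
  by_cases h : x ∈ S <;> by_cases h' : x ∈ T <;> simp [h, h', h2]

lemma Qp_add_compl (S : Set α) (hS : MeasurableSet S) (f : Lp Y 1 μ) :
    Qp 𝕜 S hS f + Qp 𝕜 Sᶜ hS.compl f = f := by
  apply Lp.ext
  filter_upwards [Qp_ae (𝕜 := 𝕜) S hS f, Qp_ae (𝕜 := 𝕜) Sᶜ hS.compl f,
    Lp.coeFn_add (Qp 𝕜 S hS f) (Qp 𝕜 Sᶜ hS.compl f)] with x h1 h2 h3
  rw [h3, Pi.add_apply, h1, h2]
  by_cases h : x ∈ S <;> simp [h]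

lemma norm_add_compl (S : Set α) (hS : MeasurableSet S) (f : Lp Y 1 μ) :
    ‖Qp 𝕜 S hS f‖ + ‖Qp 𝕜 Sᶜ hS.compl f‖ = ‖f‖ := by
  rw [norm_Qp, norm_Qp, norm_nu, measureReal_add_measureReal_compl hS]

lemma Qp_empty_of (S : Set α) (hS : MeasurableSet S) (h : S = ∅) (f : Lp Y 1 μ) :
    Qp 𝕜 S hS f = 0 := by
  rw [← norm_eq_zero, norm_Qp, h]; simp

lemma Qp_eq_self (S : Set α) (hS : MeasurableSet S) (f : Lp Y 1 μ)
    (h : (nu f).real S = ‖f‖) : Qp 𝕜 S hS f = f := by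
  have h1 := norm_add_compl (𝕜 := 𝕜) S hS f
  rw [norm_Qp, h] at h1
  have h2 : Qp 𝕜 Sᶜ hS.compl f = 0 := by rw [← norm_eq_zero]; linarith
  have := Qp_add_compl (𝕜 := 𝕜) S hS f
  rwa [h2, add_zero] at this

lemma Qp_union (S T U : Set α) (hS : MeasurableSet S) (hT : MeasurableSet T)
    (hU : MeasurableSet U) (hd : Disjoint S T) (h : U = S ∪ T) (f : Lp Y 1 μ) :
    Qp 𝕜 S hS f + Qp 𝕜 T hT f = Qp 𝕜 U hU f := by
  apply Lp.ext
  filter_upwards [Qp_ae (𝕜 := 𝕜) S hS f, Qp_ae (𝕜 := 𝕜) T hT f, Qp_ae (𝕜 := 𝕜) U hU f,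
    Lp.coeFn_add (Qp 𝕜 S hS f) (Qp 𝕜 T hT f)] with x h1 h2 h3 h4
  rw [h4, Pi.add_apply, h1, h2, h3, h, Set.indicator_union_of_disjoint hd]

lemma sum_Qp_union {κ : Type} [DecidableEq κ] (s : Finset κ) (E : κ → Set α) (hE : ∀ i, MeasurableSet (E i))
    (hd : Pairwise (fun i j => Disjoint (E i) (E j))) (f : Lp Y 1 μ) :
    ∑ i ∈ s, Qp 𝕜 (E i) (hE i) f = Qp 𝕜 (⋃ i ∈ s, E i) (s.measurableSet_biUnion fun i _ => hE i) f := by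
  induction s using Finset.induction_on with
  | empty => rw [Qp_empty_of _ _ (by simp)]; simp
  | insert i s hi ih =>
    rw [Finset.sum_insert hi, ih]
    have hdis : Disjoint (E i) (⋃ i ∈ s, E i) := by
      simp only [Set.disjoint_iUnion_right]
      intro j hj; exact hd (by rintro rfl; exact hi hj)
    exact Qp_union _ _ _ _ _ _ hdis (Finset.set_biUnion_insert _ _ _) f

lemma nu_union {κ : Type} (s : Finset κ) (E : κ → Set α) (hE : ∀ i, MeasurableSet (E i))
    (hd : Pairwise (fun i j => Disjoint (E i) (E j))) (f : Lp Y 1 μ) :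
    (nu f).real (⋃ i ∈ s, E i) = ∑ i ∈ s, (nu f).real (E i) :=
  measureReal_biUnion_finset (fun i _ j _ h => hd h) (fun i _ => hE i)

lemma nu_atomless (hμ : Atomless μ) (f : Lp Y 1 μ) : Atomless (nu f) := by
  have hfm : StronglyMeasurable (f : α → Y) := Lp.stronglyMeasurable f
  have hem : Measurable (fun x => ‖f x‖ₑ) := hfm.enorm
  have hsm : MeasurableSet {x | ‖f x‖ₑ ≠ 0} := hem (measurableSet_singleton 0).compl
  have key : ∀ S, MeasurableSet S → (nu f S = 0 ↔ μ ({x | ‖f x‖ₑ ≠ 0} ∩ S) = 0) := fun S hS =>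
    withDensity_apply_eq_zero hem
  intro A hA h0
  set A' := {x | ‖f x‖ₑ ≠ 0} ∩ A
  have hA' : MeasurableSet A' := hsm.inter hA
  have hpos : 0 < μ A' := by
    rw [pos_iff_ne_zero]; intro h; exact h0.ne' ((key A hA).2 h)
  obtain ⟨B, hB, hBm, hB0, hBl⟩ := hμ A' hA' hpos
  have hBA : B ⊆ A := hB.trans inter_subset_right
  refine ⟨B, hBA, hBm, ?_, ?_⟩
  · rw [pos_iff_ne_zero]; intro h
    rw [key B hBm, Set.inter_eq_self_of_subset_right (hB.trans inter_subset_left)] at h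
    exact hB0.ne' h
  · refine lt_of_le_of_ne (measure_mono hBA) fun h => ?_
    have h1 : nu f (A \ B) = 0 := by
      rw [measure_sdiff hBA hBm.nullMeasurableSet (measure_ne_top _ _), h, tsub_self]
    rw [key _ (hA.diff hBm)] at h1
    have h2 : μ A' ≤ μ B := by
      calc μ A' ≤ μ (B ∪ ({x | ‖f x‖ₑ ≠ 0} ∩ (A \ B))) := by
            apply measure_mono
            intro x hx
            by_cases hxB : x ∈ B
            · exact Or.inl hxB
            · exact Or.inr ⟨hx.1, hx.2, hxB⟩
        _ ≤ μ B + 0 := by exact (measure_union_le _ _).trans (by rw [h1])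
        _ = μ B := add_zero _
    exact absurd hBl (not_lt.2 h2)

/-- The operator `T g = g 1_{Aᶜ} + φ (g 1_A) x'`. -/
lemma exists_op (A : Set α) (hA : MeasurableSet A) (y x' : Lp Y 1 μ) (hy : Qp 𝕜 A hA y = y)
    (hy1 : ‖y‖ = 1) (hx' : ‖x'‖ ≤ 1) :
    ∃ T : Lp Y 1 μ →L[𝕜] Lp Y 1 μ, ‖T‖ ≤ 1 ∧ T y = x' ∧
      ∀ x, ‖T x - x‖ ≤ 2 * ‖Qp 𝕜 A hA x‖ := by
  obtain ⟨φ, hφ, hφy⟩ := exists_dual_vector'' 𝕜 y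
  have hb : ∀ x, ‖φ (Qp 𝕜 A hA x) • x'‖ ≤ ‖Qp 𝕜 A hA x‖ := fun x => by
    rw [norm_smul]
    calc _ ≤ (1 * ‖Qp 𝕜 A hA x‖) * 1 := by
          gcongr; exact (φ.le_opNorm _).trans (by gcongr)
      _ = _ := by ring
  let T0 : Lp Y 1 μ →ₗ[𝕜] Lp Y 1 μ :=
    Qp 𝕜 Aᶜ hA.compl + (φ.toLinearMap.comp (Qp 𝕜 A hA)).smulRight x'
  have hT0 : ∀ x, T0 x = Qp 𝕜 Aᶜ hA.compl x + φ (Qp 𝕜 A hA x) • x' := fun x => rfl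
  refine ⟨T0.mkContinuous 1 fun x => ?_, LinearMap.mkContinuous_norm_le _ zero_le_one _, ?_, ?_⟩
  · rw [hT0, one_mul, ← norm_add_compl (𝕜 := 𝕜) A hA x]
    refine (norm_add_le _ _).trans ?_
    linarith [hb x]
  · rw [LinearMap.mkContinuous_apply, hT0, hy, hφy, hy1]
    have : Qp 𝕜 Aᶜ hA.compl y = 0 := by
      have := Qp_add_compl (𝕜 := 𝕜) A hA y
      rw [hy] at this
      simpa using this
    rw [this]; simp
  · intro x
    rw [LinearMap.mkContinuous_apply, hT0]
    have h1 : Qp 𝕜 Aᶜ hA.compl x + φ (Qp 𝕜 A hA x) • x' - x = φ (Qp 𝕜 A hA x) • x' - Qp 𝕜 A hA x := by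
      nth_rewrite 3 [← Qp_add_compl (𝕜 := 𝕜) A hA x]
      abel
    rw [h1]
    refine (norm_sub_le _ _).trans ?_
    linarith [hb x]

end LpPart
section Core

variable {𝕜 : Type} [RCLike 𝕜] {α : Type} [MeasurableSpace α] {μ : Measure α}
  {Y : Type} [NormedAddCommGroup Y] [NormedSpace 𝕜 Y]

lemma Qp_congr {S T : Set α} (h : S = T) (hS : MeasurableSet S) (hT : MeasurableSet T)
    (f : Lp Y 1 μ) : Qp 𝕜 S hS f = Qp 𝕜 T hT f := by
  subst h; rfl

lemma core (hμ : Atomless μ) {P : Lp Y 1 μ → 𝕜} {K : ℝ} (hK : 0 ≤ K)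
    (hP : ∀ a : Lp Y 1 μ, ‖a‖ ≤ 1 → ∃ L : Lp Y 1 μ →L[𝕜] 𝕜, ‖P a‖ ≤ K ∧ ‖L‖ ≤ K ∧
      ∀ v : Lp Y 1 μ, ‖v‖ ≤ 2 → ‖P (a + v) - P a - L v‖ ≤ K * ‖v‖ ^ 2)
    (ω : 𝕜) (hω : ‖ω‖ = 1) (f : Lp Y 1 μ) (hf0 : 0 < ‖f‖) (hf1 : ‖f‖ ≤ 1)
    (m N : ℕ) (hm : 0 < m) (hN : 0 < N) (n : ℕ) (xs : Fin n → Lp Y 1 μ) :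
    ∃ (A : Set α) (hA : MeasurableSet A) (y : Lp Y 1 μ), Qp 𝕜 A hA y = y ∧ ‖y‖ = 1 ∧
      RCLike.re (ω * P f) - (∑ k, ‖xs k‖) / N - 4 * K / m ≤
        RCLike.re (ω * P y) - ∑ k, ‖Qp 𝕜 A hA (xs k)‖ := by
  classical
  set r := ‖f‖ with hr
  have hmR : (0:ℝ) < m := by exact_mod_cast hm
  have hNR : (0:ℝ) < N := by exact_mod_cast hN
  obtain ⟨E0, h1, -, h3, h4⟩ := equipartition (nu f) (nu_atomless hμ f) (r / (m * N))
    (by positivity) (m * N) univ MeasurableSet.univ (by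
      rw [← norm_nu, ← hr]; push_cast; field_simp)
  let E : Fin m × Fin N → Set α := fun p => E0 (finProdFinEquiv p)
  have hE : ∀ p, MeasurableSet (E p) := fun p => h1 _
  have hEd : Pairwise (fun p q => Disjoint (E p) (E q)) := fun p q hpq =>
    h3 (fun h => hpq (finProdFinEquiv.injective h))
  have hEn : ∀ p, ‖Qp 𝕜 (E p) (hE p) f‖ = r / (m * N) := fun p => by rw [norm_Qp]; exact h4 _
  let sg : Bool → ℝ := fun s => if s then 1 else -1
  let w : Fin N × Bool → ℝ := fun i => (1 / N) * ((1 + sg i.2 * r) / 2)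
  let v : Fin m → Fin N × Bool → Lp Y 1 μ := fun j i =>
    ((N / r * sg i.2 : ℝ) : 𝕜) • Qp 𝕜 (E (j, i.1)) (hE _) f
  let u : Fin m → Lp Y 1 μ := fun j => ∑ i, Qp 𝕜 (E (j, i)) (hE _) f
  let b : Fin m → Fin N × Bool → ℝ := fun j i => ∑ k, ‖Qp 𝕜 (E (j, i.1)) (hE _) (xs k)‖
  have hsg : ∀ s, |sg s| = 1 := fun s => by cases s <;> simp [sg]
  have hw : ∀ i, 0 ≤ w i := by
    rintro ⟨i, s⟩
    cases s <;> simp only [w, sg] <;> simp <;> apply mul_nonneg <;> first | positivity | skip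
    linarith
  have hw1 : ∑ i, w i = 1 := by
    simp only [Fintype.sum_prod_type, w, Fintype.sum_bool, sg]
    simp
    field_simp
    ring
  have hvn : ∀ j i, ‖v j i‖ = 1 / m := by
    intro j i
    simp only [v]
    rw [norm_smul, RCLike.norm_ofReal, abs_mul, hsg, mul_one, hEn, abs_of_pos (by positivity)]
    field_simp
  have hu : ∀ j, u j = ∑ i, (w i : 𝕜) • v j i := by
    intro j
    simp only [u, Fintype.sum_prod_type, Fintype.sum_bool, v, smul_smul, ← add_smul]
    refine Finset.sum_congr rfl fun i _ => ?_
    rw [← RCLike.ofReal_mul, ← RCLike.ofReal_mul, ← RCLike.ofReal_add]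
    have : w (i, true) * (N / r * sg true) + w (i, false) * (N / r * sg false) = 1 := by
      simp only [w, sg]
      simp
      field_simp
      ring
    rw [this]; simp
  obtain ⟨c, hc⟩ := greedy hK hP ω hω w hw hw1 m hm v u hu b (fun j i => (hvn j i).le)
  have hsum : ∑ j, u j = f := by
    have : ∑ j, u j = ∑ p, Qp 𝕜 (E p) (hE p) f := by
      rw [Fintype.sum_prod_type]
    rw [this, sum_Qp_union _ _ _ hEd]
    apply Qp_eq_self
    rw [nu_union _ _ hE hEd]
    have : ∀ p, (nu f).real (E p) = r / (m * N) := fun p => h4 _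
    simp only [this]
    simp
    field_simp
    exact hr
  have hb : ∑ j, ∑ i, w i * b j i ≤ (∑ k, ‖xs k‖) / N := by
    have e1 : ∑ j, ∑ i, w i * b j i = (1 / N) * ∑ k, ∑ p, (nu (xs k)).real (E p) := by
      rw [Finset.sum_comm (s := (Finset.univ : Finset (Fin n)))]
      simp only [Fintype.sum_prod_type (α₁ := Fin m), Finset.mul_sum (s := (Finset.univ : Finset (Fin m))),
        Finset.mul_sum (s := (Finset.univ : Finset (Fin N)))]
      refine Finset.sum_congr rfl fun j _ => ?_
      rw [Fintype.sum_prod_type]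
      refine Finset.sum_congr rfl fun i _ => ?_
      simp only [Fintype.sum_bool, w, b, sg, norm_Qp]
      simp
      ring
    rw [e1, one_div, inv_mul_eq_div]
    gcongr with k
    rw [← nu_union _ _ hE hEd, norm_nu]
    exact measureReal_mono (subset_univ _)
  let F : Fin m → Set α := fun j => E (j, (c j).1)
  have hF : ∀ j, MeasurableSet (F j) := fun j => hE _
  have hFd : Pairwise (fun i j => Disjoint (F i) (F j)) := fun i j hij =>
    hEd (fun h => hij (congrArg Prod.fst h))
  have hA : MeasurableSet (⋃ j ∈ (Finset.univ : Finset (Fin m)), F j) :=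
    Finset.measurableSet_biUnion _ fun j _ => hF j
  set y := ∑ j, v j (c j) with hy
  have hQA : Qp 𝕜 _ hA y = y := by
    rw [hy, map_sum]
    refine Finset.sum_congr rfl fun j _ => ?_
    simp only [v]
    rw [map_smul, Qp_Qp]
    congr 1
    refine Qp_congr (Set.inter_eq_self_of_subset_right ?_) _ _ _
    exact Set.subset_biUnion_of_mem (u := F) (Finset.mem_coe.2 (Finset.mem_univ j))
  have hQF : ∀ j, Qp 𝕜 (F j) (hF j) y = v j (c j) := by
    intro j
    rw [hy, map_sum, Finset.sum_eq_single j]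
    · simp only [v]
      rw [map_smul, Qp_Qp]
      congr 1
      exact Qp_congr (Set.inter_self _) _ _ _
    · intro k _ hk
      simp only [v]
      rw [map_smul, Qp_Qp, Qp_empty_of _ _ (Set.disjoint_iff_inter_eq_empty.1 (hFd hk.symm)), smul_zero]
    · simp
  refine ⟨_, hA, y, hQA, ?_, ?_⟩
  · rw [← hQA, norm_Qp, nu_union _ _ hF hFd]
    have : ∀ j, (nu y).real (F j) = 1 / m := fun j => by
      rw [← norm_Qp (𝕜 := 𝕜) (F j) (hF j), hQF, hvn]
    simp only [this]
    simp
    field_simp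
  · have e2 : ∑ k, ‖Qp 𝕜 _ hA (xs k)‖ = ∑ j, b j (c j) := by
      simp only [b, norm_Qp]
      rw [Finset.sum_comm]
      exact Finset.sum_congr rfl fun k _ => nu_union _ _ hF hFd _
    rw [e2, ← hsum]
    linarith

end Core

/-- For an atomless σ-finite positive measure `μ` and a nonzero Banach space `Y`, the
Bochner space `L₁(μ, Y)` has the polynomial weak operator Daugavet property. -/
theorem stmt18 (𝕜 : Type) [RCLike 𝕜] (α : Type) [MeasurableSpace α]
    (μ : Measure α) [SigmaFinite μ] (hμ : Atomless μ)
    (Y : Type) [NormedAddCommGroup Y] [NormedSpace 𝕜 Y] [CompleteSpace Y] [Nontrivial Y] :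
    PolyWODP 𝕜 (Lp Y 1 μ) := by

  intro P hPoly hlub n xs hxs x' hx' a ha ε hε
  have hle : ∀ z : Lp Y 1 μ, ‖z‖ ≤ 1 → ‖P z‖ ≤ 1 := fun z hz =>
    hlub.1 ⟨z, by simpa using hz, rfl⟩
  set δ : ℝ := min a (ε / 4) / 4 with hδ
  have hδ0 : 0 < δ := by positivity
  have hδa : 4 * δ ≤ a := by rw [hδ]; linarith [min_le_left a (ε / 4)]
  have hδε : 4 * δ ≤ ε / 4 := by rw [hδ]; linarith [min_le_right a (ε / 4)]
  obtain ⟨_, ⟨f0, hf0, rfl⟩, hf0P⟩ := (lt_isLUB_iff hlub).1 (show 1 - δ < 1 by linarith)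
  have hrot : ∀ p : 𝕜, ∃ ω : 𝕜, ‖ω‖ = 1 ∧ RCLike.re (ω * p) = ‖p‖ := by
    intro p
    obtain ⟨ω, h1, h2⟩ := RCLike.exists_norm_eq_mul_self p
    exact ⟨ω, h1, by rw [← h2]; simp⟩
  rcases subsingleton_or_nontrivial (Lp Y 1 μ) with hsub | hnt
  · obtain ⟨ω, hω, hωP⟩ := hrot (P f0)
    refine ⟨f0, ω, 0, by simpa using hf0, hω, by simp; positivity, ?_, ?_, ?_⟩
    · intro i; rw [Subsingleton.elim ((0 : Lp Y 1 μ →L[𝕜] Lp Y 1 μ) (xs i) - xs i) 0]; simpa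
    · rw [Subsingleton.elim ((0 : Lp Y 1 μ →L[𝕜] Lp Y 1 μ) f0 - x') 0]; simpa
    · rw [hωP]; simp only at hf0P; linarith
  obtain ⟨K, hK, hUC⟩ := UC.poly hPoly
  have hcont : Continuous P := by
    obtain ⟨d, c, M, h⟩ := hPoly
    rw [show P = fun x => c + ∑ k, M k (fun _ => x) from funext h]
    refine continuous_const.add (continuous_finsetSum _ fun k _ => ?_)
    exact (M k).cont.comp (continuous_pi fun _ => continuous_id)
  have hf : ∃ f : Lp Y 1 μ, 0 < ‖f‖ ∧ ‖f‖ ≤ 1 ∧ 1 - δ < ‖P f‖ := by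
    by_cases h0 : f0 = 0
    · subst h0
      have e1 : ∀ᶠ z in nhds (0 : Lp Y 1 μ), 1 - δ < ‖P z‖ :=
        (hcont.norm.tendsto 0).eventually (lt_mem_nhds hf0P)
      have e2 : ∀ᶠ z in nhds (0 : Lp Y 1 μ), ‖z‖ ≤ 1 := by
        filter_upwards [Metric.closedBall_mem_nhds (0 : Lp Y 1 μ) one_pos] with z hz
        simpa using hz
      have : (nhdsWithin (0 : Lp Y 1 μ) {0}ᶜ).NeBot := Module.punctured_nhds_neBot 𝕜 _ 0
      obtain ⟨z, ⟨hz1, hz2⟩, hz3⟩ := (((e1.and e2).filter_mono nhdsWithin_le_nhds).and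
        (self_mem_nhdsWithin (a := (0 : Lp Y 1 μ)) (s := {0}ᶜ))).exists
      exact ⟨z, norm_pos_iff.2 hz3, hz2, hz1⟩
    · exact ⟨f0, norm_pos_iff.2 h0, by simpa using hf0, hf0P⟩
  obtain ⟨f, hfp, hf1, hfP⟩ := hf
  obtain ⟨ω, hω, hωP⟩ := hrot (P f)
  obtain ⟨N, hN⟩ := exists_nat_gt (n / δ)
  obtain ⟨m, hm⟩ := exists_nat_gt (4 * K / δ)
  have hN0 : (0:ℝ) < N := lt_of_le_of_lt (by positivity) hN
  have hm0 : (0:ℝ) < m := lt_of_le_of_lt (by positivity) hm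
  obtain ⟨A, hA, y, hy, hy1, hineq⟩ := core hμ hK hUC ω hω f hfp hf1 m N
    (by exact_mod_cast hm0) (by exact_mod_cast hN0) n xs
  have i1 : (∑ k, ‖xs k‖) / N < δ := by
    simp only [hxs]
    simp
    rw [div_lt_iff₀ hδ0] at hN
    rw [div_lt_iff₀ hN0]; linarith
  have i2 : 4 * K / m < δ := by
    rw [div_lt_iff₀ hδ0] at hm
    rw [div_lt_iff₀ hm0]; linarith
  have i3 : RCLike.re (ω * P y) ≤ 1 := by
    refine (RCLike.re_le_norm _).trans ?_
    rw [norm_mul, hω, one_mul]; exact hle y hy1.le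
  have i4 : 0 ≤ ∑ k, ‖Qp 𝕜 A hA (xs k)‖ := Finset.sum_nonneg fun _ _ => norm_nonneg _
  obtain ⟨T, hT1, hTy, hTx⟩ := exists_op A hA y x' hy hy1 hx'
  refine ⟨y, ω, T, hy1.le, hω, by linarith, ?_, by rw [hTy]; simpa, by linarith⟩
  intro i
  have i5 : ‖Qp 𝕜 A hA (xs i)‖ ≤ ∑ k, ‖Qp 𝕜 A hA (xs k)‖ :=
    Finset.single_le_sum (f := fun k => ‖Qp 𝕜 A hA (xs k)‖) (fun _ _ => norm_nonneg _) (Finset.mem_univ i)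
  have := hTx (xs i)
  linarith
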